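/- Let A be a symmetric real 7×7 matrix and define the algebraic curvature tensor R_{ijkl} = Σ_{n,m} A_{nm} φ_{nij} φ_{mkl} (an element of Sym²(Ω²₇)). Then for all j,k its Ricci contraction satisfies Σ_i R_{ijki} = A_{jk} − tr(A) δ_{jk}. Consequently, if Σ_i R_{ijki} = 0 for all j,k, then A = 0 and hence R_{ijkl} = 0 for all indices: a curvature tensor in Sym²(Ω²₇) with vanishing Ricci contraction is identically zero. -/

import Mathlib

open Finset

noncomputable section

def phi0 : Fin 7 → Fin 7 → Fin 7 → ℝ := fun i j k =>
  if (i, j, k) = (0, 1, 2) then -1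
  else if (i, j, k) = (0, 3, 4) then -1
  else if (i, j, k) = (0, 5, 6) then -1
  else if (i, j, k) = (1, 3, 5) then -1
  else if (i, j, k) = (1, 4, 6) then 1
  else if (i, j, k) = (2, 3, 6) then 1
  else if (i, j, k) = (2, 4, 5) then 1
  else 0

/-- The standard G₂ 3-form on ℝ⁷ (paper's orientation convention), as a totally
antisymmetric array with `φ₁₂₃ = φ₁₄₅ = φ₁₆₇ = φ₂₄₆ = −1`, `φ₂₅₇ = φ₃₄₇ = φ₃₅₆ = 1`
(indices shifted to start at 0). -/
def phi (i j k : Fin 7) : ℝ :=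
  ∑ σ : Equiv.Perm (Fin 3),
    ((Equiv.Perm.sign σ : ℤ) : ℝ) *
      phi0 (![i, j, k] (σ 0)) (![i, j, k] (σ 1)) (![i, j, k] (σ 2))

def psi0 : Fin 7 → Fin 7 → Fin 7 → Fin 7 → ℝ := fun i j k l =>
  if (i, j, k, l) = (0, 1, 3, 6) then 1
  else if (i, j, k, l) = (0, 1, 4, 5) then 1
  else if (i, j, k, l) = (0, 2, 3, 5) then 1
  else if (i, j, k, l) = (0, 2, 4, 6) then -1
  else if (i, j, k, l) = (1, 2, 3, 4) then -1
  else if (i, j, k, l) = (1, 2, 5, 6) then -1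
  else if (i, j, k, l) = (3, 4, 5, 6) then -1
  else 0

/-- The dual 4-form ψ = ∗φ of the standard G₂-structure, as a totally antisymmetric
array with `ψ₁₂₄₇ = ψ₁₂₅₆ = ψ₁₃₄₆ = 1`, `ψ₁₃₅₇ = ψ₂₃₄₅ = ψ₂₃₆₇ = ψ₄₅₆₇ = −1`
(indices shifted to start at 0). -/
def psi (i j k l : Fin 7) : ℝ :=
  ∑ σ : Equiv.Perm (Fin 4),
    ((Equiv.Perm.sign σ : ℤ) : ℝ) *
      psi0 (![i, j, k, l] (σ 0)) (![i, j, k, l] (σ 1)) (![i, j, k, l] (σ 2))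
        (![i, j, k, l] (σ 3))

/-- Kronecker delta. -/
def kdelta (i j : Fin 7) : ℝ := if i = j then 1 else 0

/-- The G₂ cross product on ℝ⁷: `(u × v)_k = Σ_{i,j} φ_{ijk} u_i v_j`. -/
def cross (u v : Fin 7 → ℝ) : Fin 7 → ℝ := fun k =>
  ∑ i, ∑ j, phi i j k * u i * v j

/-- Euclidean inner product on ℝ⁷. -/
def dot (u v : Fin 7 → ℝ) : ℝ := ∑ i, u i * v i

end

/-!
Let `L n` be the matrix `φ_{nij}`, up to sign that of the cross product with `eₙ`. Polarizing
`u × (u × v) = ⟨u, v⟩ u - ⟨u, u⟩ v` gives the Clifford-type relation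
`L n * L m + L m * L n = eₙ eₘᵀ + eₘ eₙᵀ - 2 δₙₘ`. The Ricci contraction of `R` is, up to
transposition, `∑ A n m • (L m * L n)`; symmetry of `A` lets one replace each product by half the
anticommutator, which leaves `A - tr(A)`. If this vanishes, its trace `(1 - 7) tr(A)` does too.
-/

section SymmetricSums

variable {ι R B : Type*} [Fintype ι] [Semiring R] [NonUnitalNonAssocSemiring B] [Module R B]

theorem two_smul_sum_smul_mul_of_isSymm {A : Matrix ι ι R} (hA : A.IsSymm) (F : ι → B) :
    (2 : R) • ∑ n, ∑ m, A n m • (F m * F n) = ∑ n, ∑ m, A n m • (F n * F m + F m * F n) := by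
  have swap_eq : ∑ n, ∑ m, A n m • (F n * F m) = ∑ n, ∑ m, A n m • (F m * F n) := by
    rw [Finset.sum_comm]
    simp only [hA.apply]
  simp only [smul_add, Finset.sum_add_distrib, swap_eq, two_smul]

end SymmetricSums

section CrossProductFamilies

variable {ι κ R K : Type*}

/-- The tensor `∑ A_{nm} F_n ⊗ F_m` with four indices, built from a family of two-index tensors
`F_n` and a coefficient matrix `A`. -/
def formTensor [Fintype ι] [NonUnitalNonAssocSemiring R] (F : ι → Matrix κ κ R) (A : Matrix ι ι R)
    (i j k l : κ) : R :=
  ∑ n, ∑ m, A n m * F n i j * F m k l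

theorem formTensor_zero [Fintype ι] [NonUnitalNonAssocSemiring R] (F : ι → Matrix κ κ R)
    (i j k l : κ) : formTensor F 0 i j k l = 0 := by
  simp [formTensor]

theorem sum_formTensor_eq_sum_smul_mul [Fintype ι] [Fintype κ] [CommSemiring R]
    (F : ι → Matrix κ κ R) (A : Matrix ι ι R) (j k : κ) :
    ∑ i, formTensor F A i j k i = (∑ n, ∑ m, A n m • (F m * F n)) k j := by
  simp only [formTensor, Matrix.sum_apply, Matrix.smul_apply, Matrix.mul_apply, smul_eq_mul,
    Finset.mul_sum]
  rw [Finset.sum_comm]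
  refine Finset.sum_congr rfl fun n _ => ?_
  rw [Finset.sum_comm]
  exact Finset.sum_congr rfl fun m _ => Finset.sum_congr rfl fun i _ => by ring

variable [DecidableEq ι] [Fintype ι]

/-- The polarized identity `u × (u × v) = ⟨u, v⟩ u - ⟨u, u⟩ v` of a cross product, for the matrices
`L n` of the maps `v ↦ ± eₙ × v`. -/
def IsCrossProductFamily [Ring R] (L : ι → Matrix ι ι R) : Prop :=
  ∀ n m, L n * L m + L m * L n =
    Matrix.single n m 1 + Matrix.single m n 1 - if n = m then 2 else 0

theorem IsCrossProductFamily.map {S : Type*} [Ring R] [Ring S] {L : ι → Matrix ι ι R}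
    (hL : IsCrossProductFamily L) (f : R →+* S) : IsCrossProductFamily fun n => (L n).map f := by
  intro n m
  have mapped := congrArg f.mapMatrix (hL n m)
  simpa only [map_add, map_sub, map_mul, apply_ite f.mapMatrix, map_ofNat, map_zero,
    RingHom.mapMatrix_apply, Matrix.map_single, map_one] using mapped

theorem IsCrossProductFamily.sum_smul_anticommutator [CommRing R] {L : ι → Matrix ι ι R}
    (hL : IsCrossProductFamily L) (A : Matrix ι ι R) :
    ∑ n, ∑ m, A n m • (L n * L m + L m * L n) = A + A.transpose - (2 * A.trace) • 1 := by
  have sum_single : ∑ n, ∑ m, A n m • Matrix.single n m (1 : R) = A := by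
    simpa using (Matrix.matrix_eq_sum_single A).symm
  have sum_single_swap : ∑ n, ∑ m, A n m • Matrix.single m n (1 : R) = A.transpose := by
    rw [Finset.sum_comm]
    simpa using (Matrix.matrix_eq_sum_single A.transpose).symm
  have sum_scalar : ∑ n, ∑ m, A n m • (if n = m then (2 : Matrix ι ι R) else 0) =
      (2 * A.trace) • 1 := by
    have two_eq : (2 : Matrix ι ι R) = (2 : R) • 1 := by rw [two_smul, one_add_one_eq_two]
    simp only [smul_ite, smul_zero, Finset.sum_ite_eq, Finset.mem_univ, if_true, two_eq, smul_smul,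
      ← Finset.sum_smul, ← Finset.sum_mul, Matrix.trace, Matrix.diag_apply, mul_comm]
  simp only [hL _ _, smul_sub, smul_add, Finset.sum_sub_distrib, Finset.sum_add_distrib, sum_single,
    sum_single_swap, sum_scalar]

variable [Field K]

theorem IsCrossProductFamily.sum_smul_mul_of_isSymm [NeZero (2 : K)] {L : ι → Matrix ι ι K}
    (hL : IsCrossProductFamily L) {A : Matrix ι ι K} (hA : A.IsSymm) :
    ∑ n, ∑ m, A n m • (L m * L n) = A - A.trace • 1 := by
  apply smul_right_injective (Matrix ι ι K) (two_ne_zero : (2 : K) ≠ 0)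
  calc (2 : K) • ∑ n, ∑ m, A n m • (L m * L n)
      = A + A.transpose - (2 * A.trace) • 1 := by
        rw [two_smul_sum_smul_mul_of_isSymm hA, hL.sum_smul_anticommutator]
    _ = (2 : K) • (A - A.trace • 1) := by
        rw [hA.eq, smul_sub, two_smul, mul_smul]

theorem IsCrossProductFamily.sum_formTensor_of_isSymm [NeZero (2 : K)] {L : ι → Matrix ι ι K}
    (hL : IsCrossProductFamily L) {A : Matrix ι ι K} (hA : A.IsSymm) (j k : ι) :
    ∑ i, formTensor L A i j k i = A j k - A.trace * (if j = k then 1 else 0) := by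
  rw [sum_formTensor_eq_sum_smul_mul, hL.sum_smul_mul_of_isSymm hA]
  simp only [Matrix.sub_apply, Matrix.smul_apply, Matrix.one_apply, smul_eq_mul, hA.apply,
    eq_comm (a := k)]

theorem eq_zero_of_eq_trace_smul_one (hcard : (Fintype.card ι : K) ≠ 1) {A : Matrix ι ι K}
    (hA : A = A.trace • 1) : A = 0 := by
  have trace_eq : A.trace = A.trace * Fintype.card ι := by
    simpa [Matrix.trace_smul] using congrArg Matrix.trace hA
  have trace_eq_zero : A.trace = 0 := by
    by_contra h
    exact hcard ((mul_eq_left₀ h).mp trace_eq.symm)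
  rw [hA, trace_eq_zero, zero_smul]

theorem IsCrossProductFamily.eq_zero_of_sum_formTensor_eq_zero [NeZero (2 : K)]
    (hcard : (Fintype.card ι : K) ≠ 1) {L : ι → Matrix ι ι K} (hL : IsCrossProductFamily L)
    {A : Matrix ι ι K} (hA : A.IsSymm) (hzero : ∀ j k, ∑ i, formTensor L A i j k i = 0) :
    A = 0 := by
  refine eq_zero_of_eq_trace_smul_one hcard (Matrix.ext fun j k => ?_)
  have entry := (hL.sum_formTensor_of_isSymm hA j k).symm.trans (hzero j k)
  simpa only [Matrix.smul_apply, Matrix.one_apply, smul_eq_mul] using sub_eq_zero.mp entry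

end CrossProductFamilies

section G2Form

/-- Integer-valued copy of `phi0`, whose values the kernel can compute. -/
def phi0Int (i j k : Fin 7) : ℤ :=
  if (i, j, k) ∈ [(0, 1, 2), (0, 3, 4), (0, 5, 6), (1, 3, 5)] then -1
  else if (i, j, k) ∈ [(1, 4, 6), (2, 3, 6), (2, 4, 5)] then 1
  else 0

/-- Integer-valued copy of `phi`, packaged as the matrices `φ_{nij}` with rows `i` and
columns `j`. -/
def phiIntMatrix (n : Fin 7) : Matrix (Fin 7) (Fin 7) ℤ :=
  Matrix.of fun i j => ∑ σ : Equiv.Perm (Fin 3), (Equiv.Perm.sign σ : ℤ) *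
    phi0Int (![n, i, j] (σ 0)) (![n, i, j] (σ 1)) (![n, i, j] (σ 2))

/-- The matrices `φ_{nij}`, with rows `i` and columns `j`: up to sign, cross product with `eₙ`. -/
def phiMatrix (n : Fin 7) : Matrix (Fin 7) (Fin 7) ℝ :=
  Matrix.of (phi n)

theorem phi0_eq_intCast (i j k : Fin 7) : phi0 i j k = phi0Int i j k := by
  simp only [phi0, phi0Int, List.mem_cons, List.not_mem_nil, or_false]
  split_ifs <;> grind

theorem phiMatrix_eq_map_intCast (n : Fin 7) :
    phiMatrix n = (phiIntMatrix n).map (Int.castRingHom ℝ) := by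
  ext i j
  simp [phiMatrix, phiIntMatrix, phi, phi0_eq_intCast]

theorem isCrossProductFamily_phiIntMatrix : IsCrossProductFamily phiIntMatrix := by
  have entries : ∀ n m i j : Fin 7,
      ∑ k, (phiIntMatrix n i k * phiIntMatrix m k j + phiIntMatrix m i k * phiIntMatrix n k j) =
        (if n = i ∧ m = j then 1 else 0) + (if m = i ∧ n = j then 1 else 0)
          - if n = m then (if i = j then 2 else 0) else 0 := by
    decide +kernel
  intro n m
  ext i j
  by_cases hnm : n = m <;>
    simpa [Matrix.mul_apply, Matrix.single_apply, Matrix.ofNat_apply, Finset.sum_add_distrib, hnm]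
      using entries n m i j

theorem isCrossProductFamily_phiMatrix : IsCrossProductFamily phiMatrix := by
  simpa only [← phiMatrix_eq_map_intCast] using
    isCrossProductFamily_phiIntMatrix.map (Int.castRingHom ℝ)

end G2Form

/-- Remark `ricciflatrmk2`: a curvature tensor lying in Sym²(Ω²₇), i.e.
`R_{ijkl} = A_{nm} φ_{nij} φ_{mkl}` with A symmetric, has Ricci contraction
`Σ_i R_{ijki} = A_{jk} − tr(A) δ_{jk}`; if the Ricci contraction vanishes then
A = 0 and R ≡ 0. -/
theorem sym2_omega27_curvature (A : Fin 7 → Fin 7 → ℝ)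
    (hA : ∀ i j, A j i = A i j)
    (R : Fin 7 → Fin 7 → Fin 7 → Fin 7 → ℝ)
    (hR : ∀ i j k l, R i j k l = ∑ n, ∑ m, A n m * phi n i j * phi m k l) :
    (∀ j k : Fin 7, (∑ i, R i j k i) = A j k - (∑ n, A n n) * kdelta j k) ∧
    ((∀ j k : Fin 7, (∑ i, R i j k i) = 0) →
      (∀ j k, A j k = 0) ∧ (∀ i j k l, R i j k l = 0)) := by
  obtain rfl : R = formTensor phiMatrix A := by
    funext i j k l
    exact hR i j k l
  have hL := isCrossProductFamily_phiMatrix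
  have hsymm : Matrix.IsSymm A := Matrix.IsSymm.ext hA
  refine ⟨hL.sum_formTensor_of_isSymm hsymm, fun ricci_flat => ?_⟩
  obtain rfl : A = 0 := hL.eq_zero_of_sum_formTensor_eq_zero (by norm_num) hsymm ricci_flat
  exact ⟨fun _ _ => rfl, formTensor_zero phiMatrix⟩
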